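/- The piecewise-defined function u₁ of the vector advection test case is a weak solution of the transport equation ∇·(V u₁) = u₀² on (0,1)² with V = (1,−1) and u₀ the indicator of {x ≤ −0.4y² + 0.4y + 0.375}: for every smooth function φ : ℝ² → ℝ with compact support contained in (0,1)², −∫_{(0,1)²} u₁(x,y)·(∂φ/∂x(x,y) − ∂φ/∂y(x,y)) dx dy = ∫_{(0,1)² ∩ {x ≤ −0.4y² + 0.4y + 0.375}} φ(x,y) dx dy. -/

import Mathlib

open MeasureTheory

/-- `ỹ(x,y) = (1.4 - √(1.96 + 1.6(0.375 - x - y)))/0.8`. -/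
noncomputable def ytil (x y : ℝ) : ℝ :=
  (1.4 - Real.sqrt (1.96 + 1.6 * (0.375 - x - y))) / 0.8

/-- `x̃(x,y) = -0.4 ỹ² + 0.4 ỹ + 0.375`. -/
noncomputable def xtil (x y : ℝ) : ℝ :=
  -0.4 * (ytil x y) ^ 2 + 0.4 * ytil x y + 0.375

/-- The shock curve `c(y) = -0.4 y² + 0.4 y + 0.375`. -/
def shockCurve (y : ℝ) : ℝ := -0.4 * y ^ 2 + 0.4 * y + 0.375

/-- The exact solution `u₁` of the vector advection test case, defined piecewise:
`u₁ = 1.3 - y` if `y > 1 - x` and `x ≤ c(y)`; `u₁ = 0.3 + x` if `y ≤ 1 - x` and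
`x ≤ c(y)`; `u₁ = 0.3 + x̃` if `y ≤ 1 - x` and `x > c(y)`; `u₁ = 1.3 - ỹ` if `x > c(y)`
and `1 - x < y < 1.375 - x`; `u₁ = 0.3` if `y ≥ 1.375 - x`. -/
noncomputable def uOne (x y : ℝ) : ℝ :=
  if 1.375 - x ≤ y then 0.3
  else if x ≤ shockCurve y then (if 1 - x < y then 1.3 - y else 0.3 + x)
  else (if y ≤ 1 - x then 0.3 + xtil x y else 1.3 - ytil x y)

/-!
Put `s = x + y`, which is constant along the characteristics `t ↦ (x + t, y - t)`. Both `ỹ` and `x̃`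
depend on `s` only, and `(x̃, ỹ)` is the point where the characteristic meets the shock curve
`x = c(y)`. Below the line `y = 1` the five branches of `u₁` collapse into the single continuous
expression `0.3 + min 1 s - max y (min 1 ỹ)`, and `x ≤ c(y)` means `ỹ ≤ y`. So along a
characteristic `u₁` is, up to a constant, a ramp `min t b`, whose weak derivative is the indicator
of `t ≤ b`, that is, of `x ≤ c(y)`. By Fubini's theorem, two integrable functions with the same
integral along every characteristic have the same integral over the plane.
-/

section LineIntegrals

variable {E F : Type*} [NormedAddCommGroup E] [NormedSpace ℝ E] [MeasurableSpace E] [BorelSpace E]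
  [SecondCountableTopology E] [NormedAddCommGroup F] [NormedSpace ℝ F]
  {μ : Measure E} [SFinite μ] [μ.IsAddRightInvariant]

lemma measurePreserving_clm_prodMk_add_smul (ℓ : E →L[ℝ] ℝ) {v : E} (hv : ℓ v = 1) :
    MeasurePreserving (fun z : ℝ × E => (ℓ z.2, z.2 + z.1 • v)) (volume.prod μ)
      (volume.prod μ) := by
  have shear_space : MeasurePreserving (fun z : ℝ × E => (z.1, z.2 + z.1 • v))
      (volume.prod μ) (volume.prod μ) :=
    (MeasurePreserving.id volume).skew_product (g := fun t p => p + t • v)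
      (by fun_prop) (.of_forall fun t => map_add_right_eq_self μ (t • v))
  have shear_time : MeasurePreserving (fun z : E × ℝ => (z.1, ℓ z.1 - z.2))
      (μ.prod volume) (μ.prod volume) :=
    (MeasurePreserving.id μ).skew_product (g := fun p t => ℓ p - t)
      (by fun_prop) (.of_forall fun p => Measure.map_sub_left_eq_self volume (ℓ p))
  convert Measure.measurePreserving_swap.comp
    (shear_time.comp (Measure.measurePreserving_swap.comp shear_space)) using 2 with z
  simp [hv]

lemma integral_eq_setIntegral_integral_add_smul (ℓ : E →L[ℝ] ℝ) {v : E} (hv : ℓ v = 1)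
    {g : E → F} (hg : Integrable g μ) :
    ∫ p, g p ∂μ = ∫ p in ℓ ⁻¹' Set.Ioc 0 1, (∫ t : ℝ, g (p + t • v)) ∂μ := by
  -- Every point is `p + t • v` with `0 < ℓ p ≤ 1` for a set of times `t` of length one.
  let χ : ℝ → ℝ := (Set.Ioc 0 1).indicator 1
  have hχ : Integrable χ :=
    (integrable_indicator_iff measurableSet_Ioc).2 (integrableOn_const (by simp))
  have hχ_one : ∫ t, χ t = 1 := by simp [χ, integral_indicator_one measurableSet_Ioc]
  have hM := measurePreserving_clm_prodMk_add_smul (μ := μ) ℓ hv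
  have hχg : Integrable (fun z : ℝ × E => χ z.1 • g z.2) (volume.prod μ) := hχ.smul_prod hg
  calc ∫ p, g p ∂μ = ∫ z : ℝ × E, χ z.1 • g z.2 ∂volume.prod μ := by
        rw [integral_prod_smul, hχ_one, one_smul]
    _ = ∫ z : ℝ × E, χ (ℓ z.2) • g (z.2 + z.1 • v) ∂volume.prod μ := by
        conv_lhs => rw [← hM.map_eq]
        exact integral_map hM.aemeasurable (hM.map_eq.symm ▸ hχg.aestronglyMeasurable)
    _ = ∫ p, χ (ℓ p) • (∫ t : ℝ, g (p + t • v)) ∂μ := by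
        have hχgM := hM.integrable_comp_of_integrable hχg
        simp only [Function.comp_def] at hχgM
        simp only [integral_prod_symm _ hχgM, integral_smul]
    _ = ∫ p in ℓ ⁻¹' Set.Ioc 0 1, (∫ t : ℝ, g (p + t • v)) ∂μ := by
        rw [← integral_indicator (ℓ.measurable measurableSet_Ioc)]
        congr with p
        by_cases hp : ℓ p ∈ Set.Ioc (0 : ℝ) 1 <;> simp [χ, hp]

lemma integral_eq_of_forall_integral_add_smul_eq {v : E} (hv : v ≠ 0) {f g : E → F}
    (hf : Integrable f μ) (hg : Integrable g μ)
    (h : ∀ p, ∫ t : ℝ, f (p + t • v) = ∫ t : ℝ, g (p + t • v)) :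
    ∫ p, f p ∂μ = ∫ p, g p ∂μ := by
  obtain ⟨ℓ, hℓ⟩ := SeparatingDual.exists_eq_one (R := ℝ) hv
  simp only [integral_eq_setIntegral_integral_add_smul ℓ hℓ hf,
    integral_eq_setIntegral_integral_add_smul ℓ hℓ hg, h]

lemma neg_integral_mul_fderiv_eq_of_forall_line {v : E} (hv : v ≠ 0) {u f φ : E → ℝ}
    (hφ : Differentiable ℝ φ) (hu : Integrable (fun p => u p * fderiv ℝ φ p v) μ)
    (hf : Integrable f μ)
    (h : ∀ p, -∫ t : ℝ, u (p + t • v) * deriv (fun t : ℝ => φ (p + t • v)) t =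
      ∫ t : ℝ, f (p + t • v)) :
    -∫ p, u p * fderiv ℝ φ p v ∂μ = ∫ p, f p ∂μ := by
  have hderiv (p : E) (t : ℝ) :
      deriv (fun t : ℝ => φ (p + t • v)) t = fderiv ℝ φ (p + t • v) v := by
    have hline : HasDerivAt (fun t : ℝ => p + t • v) v t := by
      simpa using ((hasDerivAt_id t).smul_const v).const_add p
    exact ((hφ _).hasFDerivAt.comp_hasDerivAt t hline).deriv
  rw [← integral_neg]
  refine integral_eq_of_forall_integral_add_smul_eq hv hu.neg hf fun p => ?_
  rw [integral_neg, ← h p]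
  simp only [hderiv]

end LineIntegrals

lemma isClosedEmbedding_add_smul {𝕜 E : Type*} [NontriviallyNormedField 𝕜] [CompleteSpace 𝕜]
    [AddCommGroup E] [Module 𝕜 E] [TopologicalSpace E] [IsTopologicalAddGroup E]
    [ContinuousSMul 𝕜 E] [T2Space E] (p : E) {v : E} (hv : v ≠ 0) :
    Topology.IsClosedEmbedding fun t : 𝕜 => p + t • v :=
  (Homeomorph.addLeft p).isClosedEmbedding.comp (isClosedEmbedding_smul_left hv)

lemma integral_comp_min_mul_deriv {g f : ℝ → ℝ} (hg : ContDiff ℝ 1 g) (hf : ContDiff ℝ 1 f)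
    (hc : HasCompactSupport f) (b : ℝ) :
    ∫ t, g (min t b) * deriv f t = -∫ t in Set.Iic b, deriv g t * f t := by
  have hf' : Continuous (deriv f) := hf.continuous_deriv le_rfl
  have hg' : Continuous (deriv g) := hg.continuous_deriv le_rfl
  have hint {k : ℝ → ℝ} (hk : Continuous k) : Integrable fun t => k t * deriv f t :=
    (hk.mul hf').integrable_of_hasCompactSupport hc.deriv.mul_left
  have hint' : Integrable fun t => deriv g t * f t :=
    (hg'.mul hf.continuous).integrable_of_hasCompactSupport hc.mul_left
  have hIic : ∫ t in Set.Iic b, g (min t b) * deriv f t =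
      g b * f b - ∫ t in Set.Iic b, deriv g t * f t := by
    have hprod : deriv (fun t => g t * f t) = fun t => deriv g t * f t + g t * deriv f t :=
      funext fun t => deriv_fun_mul (hg.differentiable one_ne_zero t)
        (hf.differentiable one_ne_zero t)
    have hftc := HasCompactSupport.integral_Iic_deriv_eq (hg.mul hf) hc.mul_left b
    rw [hprod, integral_add hint'.integrableOn (hint hg.continuous).integrableOn] at hftc
    rw [eq_sub_iff_add_eq', ← hftc]
    congr 1
    exact setIntegral_congr_fun measurableSet_Iic fun t (ht : t ≤ b) => by
      simp only [min_eq_left ht]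
  have hIoi : ∫ t in Set.Ioi b, g (min t b) * deriv f t = -(g b * f b) := by
    rw [← mul_neg, ← HasCompactSupport.integral_Ioi_deriv_eq hf hc b, ← integral_const_mul]
    exact setIntegral_congr_fun measurableSet_Ioi fun t (ht : b < t) => by
      simp only [min_eq_right ht.le]
  have hramp := hint (k := fun t => g (min t b)) (by have := hg.continuous; fun_prop)
  rw [← intervalIntegral.integral_Iic_add_Ioi hramp.integrableOn hramp.integrableOn, hIic, hIoi]
  ring

lemma continuous_ytil : Continuous fun p : ℝ × ℝ => ytil p.1 p.2 := by
  unfold ytil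
  fun_prop

lemma ytil_add_sub (x y t : ℝ) : ytil (x + t) (y - t) = ytil x y := by
  unfold ytil
  ring_nf

lemma xtil_add_ytil {x y : ℝ} (h : x + y ≤ 1.6) : xtil x y + ytil x y = x + y := by
  have h_sq := Real.sq_sqrt (x := 1.96 + 1.6 * (0.375 - x - y)) (by linarith)
  unfold xtil ytil
  linear_combination (-0.625) * h_sq

lemma le_shockCurve_iff_ytil_le {x y : ℝ} (hy : y < 1.75) : x ≤ shockCurve y ↔ ytil x y ≤ y :=
  calc x ≤ shockCurve y
      ↔ (1.4 - 0.8 * y) ^ 2 ≤ 1.96 + 1.6 * (0.375 - x - y) := by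
        unfold shockCurve
        constructor <;> intro h <;> linarith
    _ ↔ 1.4 - 0.8 * y ≤ √(1.96 + 1.6 * (0.375 - x - y)) :=
        (Real.le_sqrt' (by linarith)).symm
    _ ↔ ytil x y ≤ y := by
        rw [ytil, div_le_iff₀ (by norm_num)]
        constructor <;> intro h <;> linarith

lemma one_le_ytil_iff {x y : ℝ} : 1 ≤ ytil x y ↔ 1.375 ≤ x + y := by
  rw [ytil, le_div_iff₀ (by norm_num), one_mul, le_sub_comm, Real.sqrt_le_left (by norm_num)]
  constructor <;> intro h <;> linarith

lemma uOne_eq_min_sub_max {x y : ℝ} (hy : y < 1) :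
    uOne x y = 0.3 + min 1 (x + y) - max y (min 1 (ytil x y)) := by
  have hshock_iff := le_shockCurve_iff_ytil_le (x := x) (y := y) (by linarith)
  have hytil_iff := one_le_ytil_iff (x := x) (y := y)
  unfold uOne
  split_ifs with h_last h_before h_above h_below
  · rw [min_eq_left (by linarith), min_eq_left (hytil_iff.2 (by linarith)), max_eq_right hy.le]
    norm_num
  · rw [min_eq_left (by linarith), max_eq_left (min_le_of_right_le (hshock_iff.1 h_before))]
    norm_num
  · rw [min_eq_right (by linarith), max_eq_left (min_le_of_right_le (hshock_iff.1 h_before))]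
    ring
  all_goals
    have hsum := xtil_add_ytil (x := x) (y := y) (by linarith)
    have hytil : ytil x y < 1 := not_le.1 (mt hytil_iff.1 (by linarith))
    have hafter : y < ytil x y := not_le.1 (mt hshock_iff.2 ‹_›)
    rw [min_eq_right hytil.le, max_eq_right hafter.le]
  · rw [min_eq_right (by linarith)]
    linarith
  · rw [min_eq_left (by linarith)]
    norm_num

lemma continuousOn_uOne : ContinuousOn (fun p : ℝ × ℝ => uOne p.1 p.2) {p | p.2 < 1} := by
  have := continuous_ytil
  exact ContinuousOn.congr (by fun_prop) fun p hp => uOne_eq_min_sub_max hp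

lemma measurableSet_le_shockCurve : MeasurableSet {p : ℝ × ℝ | p.1 ≤ shockCurve p.2} := by
  unfold shockCurve
  exact measurableSet_le (by fun_prop) (by fun_prop)

/-- The time at which the characteristic `t ↦ (x + t, y - t)` crosses the shock curve. If
`1.375 ≤ x + y`, the part of the characteristic below the line `y = 1` lies entirely beyond the
shock curve, and the time is the one at which the characteristic enters that half-plane. -/
noncomputable def shockTime (x y : ℝ) : ℝ :=
  y - min 1 (ytil x y)

lemma le_shockCurve_iff_le_shockTime {x y t : ℝ} (ht : y - t < 1) :
    x + t ≤ shockCurve (y - t) ↔ t ≤ shockTime x y := by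
  rw [le_shockCurve_iff_ytil_le (by linarith), ytil_add_sub, shockTime, le_sub_comm (a := t),
    min_le_iff, or_iff_right ht.not_ge]

lemma uOne_eq_add_min_shockTime {x y t : ℝ} (ht : y - t < 1) :
    uOne (x + t) (y - t) = 0.3 + min 1 (x + y) - y + min t (shockTime x y) := by
  have hmax : max (y - t) (min 1 (ytil x y)) = y - min t (shockTime x y) := by
    rw [← max_sub_sub_left, shockTime, sub_sub_cancel]
  rw [uOne_eq_min_sub_max ht, ytil_add_sub, add_add_sub_cancel, hmax]
  ring

lemma neg_integral_uOne_mul_deriv_characteristic {f : ℝ → ℝ} (hf : ContDiff ℝ 1 f)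
    (hc : HasCompactSupport f) {x y : ℝ} (hlt : ∀ t ∈ tsupport f, y - t < 1) :
    -∫ t, uOne (x + t) (y - t) * deriv f t =
      ∫ t, {t | x + t ≤ shockCurve (y - t)}.indicator f t := by
  have hramp (t : ℝ) : uOne (x + t) (y - t) * deriv f t =
      (0.3 + min 1 (x + y) - y + min t (shockTime x y)) * deriv f t := by
    by_cases ht : t ∈ tsupport f
    · rw [uOne_eq_add_min_shockTime (hlt t ht)]
    · rw [image_eq_zero_of_notMem_tsupport (mt (tsupport_deriv_subset ·) ht), mul_zero, mul_zero]
  have hind : {t | x + t ≤ shockCurve (y - t)}.indicator f =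
      (Set.Iic (shockTime x y)).indicator f := by
    ext t
    by_cases ht : t ∈ tsupport f
    · simp [Set.indicator_apply, le_shockCurve_iff_le_shockTime (hlt t ht)]
    · simp [Set.indicator_apply, image_eq_zero_of_notMem_tsupport ht]
  simp only [hramp, hind, integral_indicator measurableSet_Iic]
  rw [integral_comp_min_mul_deriv (g := fun t => 0.3 + min 1 (x + y) - y + t) (by fun_prop) hf hc]
  simp

lemma integrable_uOne_mul_of_tsupport_subset {g : ℝ × ℝ → ℝ} (hg : Continuous g)
    (hc : HasCompactSupport g) (hsupp : tsupport g ⊆ {p | p.2 < 1}) :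
    Integrable fun p => uOne p.1 p.2 * g p := by
  have hcont : Continuous fun p => uOne p.1 p.2 * g p :=
    (continuousOn_uOne.mul hg.continuousOn).continuous_of_tsupport_subset
      (isOpen_lt continuous_snd continuous_const) (tsupport_mul_subset_right.trans hsupp)
  exact hcont.integrable_of_hasCompactSupport hc.mul_left

lemma neg_integral_uOne_mul_fderiv {φ : ℝ × ℝ → ℝ} (hφ : ContDiff ℝ 1 φ)
    (hcpt : HasCompactSupport φ) (hsupp : tsupport φ ⊆ {p | p.2 < 1}) :
    -∫ p, uOne p.1 p.2 * fderiv ℝ φ p (1, -1) =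
      ∫ p, {p : ℝ × ℝ | p.1 ≤ shockCurve p.2}.indicator φ p := by
  have hV : ((1, -1) : ℝ × ℝ) ≠ 0 := by simp
  refine neg_integral_mul_fderiv_eq_of_forall_line hV (hφ.differentiable one_ne_zero)
    (integrable_uOne_mul_of_tsupport_subset
      ((hφ.continuous_fderiv one_ne_zero).clm_apply continuous_const) (hcpt.fderiv_apply ℝ _)
      ((tsupport_fderiv_apply_subset ℝ _).trans hsupp))
    ((hφ.continuous.integrable_of_hasCompactSupport hcpt).indicator measurableSet_le_shockCurve)
    fun p => ?_
  have hline := isClosedEmbedding_add_smul (𝕜 := ℝ) p hV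
  have hlt (t : ℝ) (ht : t ∈ tsupport fun t : ℝ => φ (p + t • (1, -1))) : p.2 - t < 1 := by
    simpa [sub_eq_add_neg] using hsupp (tsupport_comp_subset_preimage φ hline.continuous ht)
  simpa [sub_eq_add_neg, Set.indicator_apply] using
    neg_integral_uOne_mul_deriv_characteristic (x := p.1)
      (f := fun t => φ (p + t • (1, -1))) (by fun_prop) (hcpt.comp_isClosedEmbedding hline) hlt

theorem uOne_weak_solution_general {Ω : Set (ℝ × ℝ)} (hΩ : Ω ⊆ {p | p.2 < 1})
    {φ : ℝ × ℝ → ℝ} (hφ : ContDiff ℝ 1 φ) (hcpt : HasCompactSupport φ) (hsupp : tsupport φ ⊆ Ω) :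
    -∫ p in Ω, uOne p.1 p.2 * (fderiv ℝ φ p (1, 0) - fderiv ℝ φ p (0, 1)) =
      ∫ p in Ω ∩ {p : ℝ × ℝ | p.1 ≤ shockCurve p.2}, φ p := by
  have hdir (p : ℝ × ℝ) :
      fderiv ℝ φ p (1, 0) - fderiv ℝ φ p (0, 1) = fderiv ℝ φ p (1, -1) := by
    simp [← map_sub]
  have hφ_zero : ∀ p ∉ Ω, φ p = 0 := fun p hp =>
    image_eq_zero_of_notMem_tsupport (mt (hsupp ·) hp)
  have hfderiv_zero : ∀ p ∉ Ω, fderiv ℝ φ p = 0 := fun p hp =>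
    image_eq_zero_of_notMem_tsupport (mt (hsupp <| tsupport_fderiv_subset ℝ ·) hp)
  simp only [hdir]
  rw [← setIntegral_indicator measurableSet_le_shockCurve,
    setIntegral_eq_integral_of_forall_compl_eq_zero fun p hp => by simp [hfderiv_zero p hp],
    setIntegral_eq_integral_of_forall_compl_eq_zero fun p hp => by
      simp [Set.indicator_apply, hφ_zero p hp]]
  exact neg_integral_uOne_mul_fderiv hφ hcpt (hsupp.trans hΩ)

/-- The piecewise-defined `u₁` is a weak solution of the transport equation
`∇·(V u₁) = u₀²` on `(0,1)²` with `V = (1,-1)` and `u₀` the indicator of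
`{x ≤ -0.4 y² + 0.4 y + 0.375}`: for every smooth `φ` with compact support contained
in `(0,1)²`,
`-∫_{(0,1)²} u₁ (∂φ/∂x - ∂φ/∂y) = ∫_{(0,1)² ∩ {x ≤ c(y)}} φ`. -/
theorem uOne_weak_solution
    (φ : ℝ × ℝ → ℝ) (hφ : ContDiff ℝ (⊤ : ℕ∞) φ) (hcpt : HasCompactSupport φ)
    (hsupp : tsupport φ ⊆ Set.Ioo (0:ℝ) 1 ×ˢ Set.Ioo (0:ℝ) 1) :
    -∫ p in Set.Ioo (0:ℝ) 1 ×ˢ Set.Ioo (0:ℝ) 1,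
        uOne p.1 p.2 * (fderiv ℝ φ p (1, 0) - fderiv ℝ φ p (0, 1)) =
      ∫ p in (Set.Ioo (0:ℝ) 1 ×ˢ Set.Ioo (0:ℝ) 1) ∩ {p : ℝ × ℝ | p.1 ≤ shockCurve p.2},
        φ p :=
  uOne_weak_solution_general (fun _ hp => hp.2.2) (hφ.of_le (by simp)) hcpt hsupp
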